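/- For every y ∈ (ℝᵐ)^T, strong duality holds for the smoothed tracking problem: min_{x ∈ (ℝⁿ)^T} p(x; y) = Σ_{t=1}^T (1/2)‖y_t‖₂² − (1/2)·min_{s ∈ S} Σ_{t=1}^T ‖P y_t − (Kᵀ)† s_t‖₂². Moreover, both minima are attained and there exist minimizers x* of the left-hand problem and s* ∈ S of the right-hand problem satisfying KᵀK x*_t = Kᵀ y_t − s*_t for all t ∈ {1,…,T}. -/

import Mathlib

open Finset

noncomputable def norm2sq {m : ℕ} (v : Fin m → ℝ) : ℝ := ∑ i, (v i) ^ 2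
noncomputable def norm1 {n : ℕ} (v : Fin n → ℝ) : ℝ := ∑ i, |v i|

noncomputable def pinv {m n : ℕ} (K : Matrix (Fin m) (Fin n) ℝ) :
    Matrix (Fin n) (Fin m) ℝ := (K.transpose * K)⁻¹ * K.transpose

noncomputable def proj {m n : ℕ} (K : Matrix (Fin m) (Fin n) ℝ) :
    Matrix (Fin m) (Fin m) ℝ := K * pinv K

/-- Pseudoinverse of `Kᵀ`, namely `(Kᵀ)† = K (KᵀK)⁻¹`. -/
noncomputable def pinvT {m n : ℕ} (K : Matrix (Fin m) (Fin n) ℝ) :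
    Matrix (Fin m) (Fin n) ℝ := K * (K.transpose * K)⁻¹

noncomputable def trackCost {m n : ℕ} (β : ℝ) (K : Matrix (Fin m) (Fin n) ℝ)
    (T : ℕ) (y : ℕ → Fin m → ℝ) (x : ℕ → Fin n → ℝ) : ℝ :=
  ∑ t ∈ Finset.Icc 1 T,
    ((1 / 2) * norm2sq (y t - K.mulVec (x t)) + β * norm1 (x t - x (t - 1)))

/-- The dual feasible set `S`. -/
def dualSet {n : ℕ} (β : ℝ) (T : ℕ) : Set (ℕ → Fin n → ℝ) :=
  {s | ∃ lam : ℕ → Fin n → ℝ, lam (T + 1) = 0 ∧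
        (∀ t ∈ Finset.Icc 1 T, ∀ i, |lam t i| ≤ β) ∧
        (∀ t ∈ Finset.Icc 1 T, s t = lam t - lam (t + 1))}

/-- Dual objective `Σ_t ‖P y_t − (Kᵀ)† s_t‖²`. -/
noncomputable def dualObj {m n : ℕ} (K : Matrix (Fin m) (Fin n) ℝ) (T : ℕ)
    (y : ℕ → Fin m → ℝ) (s : ℕ → Fin n → ℝ) : ℝ :=
  ∑ t ∈ Finset.Icc 1 T, norm2sq ((proj K).mulVec (y t) - (pinvT K).mulVec (s t))

/-!
The switching cost is the support function of the dual set `S`: summing by parts,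
`∑ ⟪x_t, λ_t - λ_{t+1}⟫ = ∑ ⟪x_t - x_{t-1}, λ_t⟫`, which is maximal at
`λ_t = β sign(x_t - x_{t-1})`. So the problem is the minimax of the Lagrangian
`L(x, s) = ∑ (½ ‖y_t - K x_t‖² + ⟪x_t, s_t⟫)`. Completing the square gives
`L(x, s) = D(s) + ½ ∑ ‖K (x_t - x̂_t(s))‖²`, where `D` is the dual value and `x̂(s)` solves the
normal equations `KᵀK x̂_t = Kᵀ y_t - s_t`. If `s` maximizes `D` over `S`, then `s` also maximizes
the pairing with `x̂(s)` over `S` (Danskin's argument), so `(x̂(s), s)` is a saddle point.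
-/

section

open scoped Matrix

variable {m n : ℕ}

section NormalEquations

lemma norm2sq_eq_dotProduct (v : Fin m → ℝ) : norm2sq v = v ⬝ᵥ v := by
  simp only [norm2sq, dotProduct, sq]

lemma norm2sq_nonneg (v : Fin m → ℝ) : 0 ≤ norm2sq v :=
  sum_nonneg fun i _ => sq_nonneg (v i)

lemma norm2sq_sub (u v : Fin m → ℝ) :
    norm2sq (u - v) = norm2sq u - 2 * (u ⬝ᵥ v) + norm2sq v := by
  simp only [norm2sq_eq_dotProduct, sub_dotProduct, dotProduct_sub, dotProduct_comm v u]
  ring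

/-- The solution `(KᵀK)⁻¹ (Kᵀ y - s)` of the normal equations with right-hand side perturbed
by `s`. -/
noncomputable def normalSolution (K : Matrix (Fin m) (Fin n) ℝ) (y : Fin m → ℝ)
    (s : Fin n → ℝ) : Fin n → ℝ :=
  (Kᵀ * K)⁻¹ *ᵥ (Kᵀ *ᵥ y - s)

lemma gram_mulVec_normalSolution {K : Matrix (Fin m) (Fin n) ℝ} (hK : IsUnit (Kᵀ * K).det)
    (y : Fin m → ℝ) (s : Fin n → ℝ) :
    (Kᵀ * K) *ᵥ normalSolution K y s = Kᵀ *ᵥ y - s := by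
  rw [normalSolution, Matrix.mulVec_mulVec, Matrix.mul_nonsing_inv _ hK, Matrix.one_mulVec]

lemma proj_mulVec_sub_pinvT_mulVec (K : Matrix (Fin m) (Fin n) ℝ) (y : Fin m → ℝ)
    (s : Fin n → ℝ) :
    proj K *ᵥ y - pinvT K *ᵥ s = K *ᵥ normalSolution K y s := by
  simp only [proj, pinv, pinvT, normalSolution, Matrix.mulVec_sub, Matrix.mulVec_mulVec]

lemma half_norm2sq_sub_mulVec_add_dotProduct {K : Matrix (Fin m) (Fin n) ℝ}
    (hK : IsUnit (Kᵀ * K).det) (y : Fin m → ℝ) (x s : Fin n → ℝ) :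
    (1 / 2) * norm2sq (y - K *ᵥ x) + x ⬝ᵥ s =
      (1 / 2) * norm2sq y - (1 / 2) * norm2sq (proj K *ᵥ y - pinvT K *ᵥ s) +
        (1 / 2) * norm2sq (K *ᵥ x - K *ᵥ normalSolution K y s) := by
  have hs : s = Kᵀ *ᵥ y - Kᵀ *ᵥ (K *ᵥ normalSolution K y s) := by
    rw [Matrix.mulVec_mulVec, gram_mulVec_normalSolution hK, sub_sub_cancel]
  have hxs : x ⬝ᵥ s = y ⬝ᵥ K *ᵥ x - K *ᵥ x ⬝ᵥ K *ᵥ normalSolution K y s := by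
    conv_lhs => rw [hs]
    rw [dotProduct_sub, Matrix.dotProduct_mulVec, Matrix.dotProduct_mulVec,
      Matrix.vecMul_transpose, dotProduct_comm y]
  rw [proj_mulVec_sub_pinvT_mulVec, hxs, norm2sq_sub, norm2sq_sub]
  ring

end NormalEquations

section SwitchingCost

/-- The inner product `∑ ⟪x_t, s_t⟫` of two paths over the times `1, …, T`. -/
def pathInner (T : ℕ) (x s : ℕ → Fin n → ℝ) : ℝ := ∑ t ∈ Icc 1 T, x t ⬝ᵥ s t

/-- The switching part `∑ β ‖x_t - x_{t-1}‖₁` of `trackCost`. -/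
noncomputable def switchingCost (β : ℝ) (T : ℕ) (x : ℕ → Fin n → ℝ) : ℝ :=
  ∑ t ∈ Icc 1 T, β * norm1 (x t - x (t - 1))

lemma pathInner_add_smul (T : ℕ) (x s d : ℕ → Fin n → ℝ) (e : ℝ) :
    pathInner T x (s + e • d) = pathInner T x s + e * pathInner T x d := by
  simp only [pathInner, Pi.add_apply, Pi.smul_apply, dotProduct_add, dotProduct_smul, smul_eq_mul,
    sum_add_distrib, mul_sum]

lemma pathInner_sub (T : ℕ) (x s d : ℕ → Fin n → ℝ) :
    pathInner T x (s - d) = pathInner T x s - pathInner T x d := by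
  simp only [pathInner, Pi.sub_apply, dotProduct_sub, sum_sub_distrib]

lemma continuous_pathInner_left (T : ℕ) (s : ℕ → Fin n → ℝ) :
    Continuous fun x => pathInner T x s := by
  unfold pathInner
  fun_prop

lemma sum_dotProduct_sub_succ {ι R : Type*} [Fintype ι] [CommRing R] (T : ℕ)
    {x : ℕ → ι → R} (lam : ℕ → ι → R) (hx : x 0 = 0) :
    ∑ t ∈ Icc 1 T, x t ⬝ᵥ (lam t - lam (t + 1)) =
      ∑ t ∈ Icc 1 T, (x t - x (t - 1)) ⬝ᵥ lam t - x T ⬝ᵥ lam (T + 1) := by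
  induction T with
  | zero => simp [hx]
  | succ T ih =>
    rw [sum_Icc_succ_top (Nat.le_add_left 1 T), sum_Icc_succ_top (Nat.le_add_left 1 T), ih]
    simp only [dotProduct_sub, sub_dotProduct, Nat.add_sub_cancel]
    ring

lemma pathInner_eq_sum_sub_dotProduct {T : ℕ} {x s lam : ℕ → Fin n → ℝ} (hx : x 0 = 0)
    (hlam : lam (T + 1) = 0) (hs : ∀ t ∈ Icc 1 T, s t = lam t - lam (t + 1)) :
    pathInner T x s = ∑ t ∈ Icc 1 T, (x t - x (t - 1)) ⬝ᵥ lam t := by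
  have hparts := sum_dotProduct_sub_succ T lam hx
  rw [hlam, dotProduct_zero, sub_zero] at hparts
  exact (sum_congr rfl fun t ht => by rw [hs t ht]).trans hparts

lemma dotProduct_le_mul_norm1 {β : ℝ} {l : Fin n → ℝ} (hl : ∀ i, |l i| ≤ β) (d : Fin n → ℝ) :
    d ⬝ᵥ l ≤ β * norm1 d := by
  rw [norm1, mul_sum]
  refine sum_le_sum fun i _ => ?_
  calc d i * l i ≤ |l i| * |d i| := by rw [← abs_mul, mul_comm]; exact le_abs_self _
    _ ≤ β * |d i| := mul_le_mul_of_nonneg_right (hl i) (abs_nonneg _)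

lemma pathInner_le_switchingCost {β : ℝ} {T : ℕ} {x s : ℕ → Fin n → ℝ} (hx : x 0 = 0)
    (hs : s ∈ dualSet β T) : pathInner T x s ≤ switchingCost β T x := by
  obtain ⟨lam, hlast, hbound, hdiff⟩ := hs
  rw [pathInner_eq_sum_sub_dotProduct hx hlast hdiff]
  exact sum_le_sum fun t ht => dotProduct_le_mul_norm1 (hbound t ht) _

lemma dotProduct_mul_sign (β : ℝ) (d : Fin n → ℝ) :
    (d ⬝ᵥ fun i => β * SignType.sign (d i)) = β * norm1 d := by
  simp only [dotProduct, norm1, mul_sum, mul_left_comm, self_mul_sign]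

lemma abs_mul_sign_le {β : ℝ} (hβ : 0 ≤ β) (a : ℝ) : |β * SignType.sign a| ≤ β := by
  rcases lt_trichotomy a 0 with ha | rfl | ha <;> simp [*, abs_of_nonneg]

lemma isGreatest_pathInner_image_dualSet {β : ℝ} (hβ : 0 ≤ β) (T : ℕ) {x : ℕ → Fin n → ℝ}
    (hx : x 0 = 0) :
    IsGreatest (pathInner T x '' dualSet β T) (switchingCost β T x) := by
  refine ⟨?_, Set.forall_mem_image.2 fun _ => pathInner_le_switchingCost hx⟩
  let lam : ℕ → Fin n → ℝ := fun t =>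
    if t ≤ T then fun i => β * SignType.sign ((x t - x (t - 1)) i) else 0
  have hlam : ∀ t ∈ Icc 1 T, lam t = fun i => β * SignType.sign ((x t - x (t - 1)) i) :=
    fun t ht => if_pos (mem_Icc.1 ht).2
  have hlast : lam (T + 1) = 0 := if_neg (Nat.not_succ_le_self T)
  refine ⟨fun t => lam t - lam (t + 1), ⟨lam, hlast, fun t ht i => ?_, fun _ _ => rfl⟩, ?_⟩
  · rw [hlam t ht]
    exact abs_mul_sign_le hβ _
  · rw [pathInner_eq_sum_sub_dotProduct hx hlast fun _ _ => rfl]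
    exact sum_congr rfl fun t ht => by rw [hlam t ht, dotProduct_mul_sign]

end SwitchingCost

section DualProblem

lemma convex_dualSet (β : ℝ) (T : ℕ) : Convex ℝ (dualSet β T : Set (ℕ → Fin n → ℝ)) := by
  rintro s ⟨lam, hlam, hlamβ, hs⟩ s' ⟨mu, hmu, hmuβ, hs'⟩ a b ha hb hab
  refine ⟨a • lam + b • mu, by simp [hlam, hmu], fun t ht i => ?_, fun t ht => ?_⟩
  · exact abs_le.2 (convex_Icc (-β) β (abs_le.1 (hlamβ t ht i)) (abs_le.1 (hmuβ t ht i)) ha hb hab)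
  · simp only [Pi.add_apply, Pi.smul_apply, hs t ht, hs' t ht, smul_sub]
    abel

/-- The multiplier paths `λ` of `dualSet`, bounded by `β` at all times, not only at `1, …, T`.
This changes no path of differences on `1, …, T` and makes the set compact. -/
def multiplierSet (β : ℝ) (T : ℕ) : Set (ℕ → Fin n → ℝ) :=
  Set.Icc (fun _ _ => -β) (fun _ _ => β) ∩ {lam | lam (T + 1) = 0}

lemma isCompact_multiplierSet (β : ℝ) (T : ℕ) :
    IsCompact (multiplierSet β T : Set (ℕ → Fin n → ℝ)) :=
  isCompact_Icc.inter_right (isClosed_eq (continuous_apply _) continuous_const)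

lemma mem_dualSet_iff_exists_mem_multiplierSet {β : ℝ} (hβ : 0 ≤ β) {T : ℕ}
    {s : ℕ → Fin n → ℝ} :
    s ∈ dualSet β T ↔
      ∃ lam ∈ multiplierSet β T, ∀ t ∈ Icc 1 T, s t = lam t - lam (t + 1) := by
  constructor
  · rintro ⟨lam, hlast, hbound, hs⟩
    let mu : ℕ → Fin n → ℝ := fun t => if t ∈ Icc 1 (T + 1) then lam t else 0
    have hmu : ∀ t ∈ Icc 1 (T + 1), mu t = lam t := fun t ht => if_pos ht
    have hmuβ : ∀ t i, |mu t i| ≤ β := by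
      intro t i
      by_cases ht : t ∈ Icc 1 T
      · rw [hmu t (Icc_subset_Icc_right T.le_succ ht)]
        exact hbound t ht i
      · have hzero : mu t = 0 := by
          simp only [mu, ite_eq_right_iff, mem_Icc] at ht ⊢
          intro ht'
          rwa [show t = T + 1 by lia]
        simpa [hzero] using hβ
    refine ⟨mu, ⟨⟨fun t i => (abs_le.1 (hmuβ t i)).1, fun t i => (abs_le.1 (hmuβ t i)).2⟩,
      (hmu _ (by simp)).trans hlast⟩, fun t ht => ?_⟩
    have ⟨ht1, htT⟩ := mem_Icc.1 ht
    rw [hs t ht, hmu t (mem_Icc.2 ⟨ht1, by lia⟩), hmu (t + 1) (mem_Icc.2 ⟨by lia, by lia⟩)]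
  · rintro ⟨lam, ⟨hbound, hlast⟩, hs⟩
    exact ⟨lam, hlast, fun t _ i => abs_le.2 ⟨hbound.1 t i, hbound.2 t i⟩, hs⟩

lemma continuous_dualObj (K : Matrix (Fin m) (Fin n) ℝ) (T : ℕ) (y : ℕ → Fin m → ℝ) :
    Continuous (dualObj K T y) := by
  unfold dualObj norm2sq
  fun_prop

lemma dualObj_congr (K : Matrix (Fin m) (Fin n) ℝ) {T : ℕ} (y : ℕ → Fin m → ℝ)
    {s s' : ℕ → Fin n → ℝ} (h : ∀ t ∈ Icc 1 T, s t = s' t) : dualObj K T y s = dualObj K T y s' :=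
  sum_congr rfl fun t ht => by rw [h t ht]

lemma exists_isMinOn_dualObj {β : ℝ} (hβ : 0 ≤ β) (K : Matrix (Fin m) (Fin n) ℝ) (T : ℕ)
    (y : ℕ → Fin m → ℝ) :
    ∃ s ∈ (dualSet β T : Set (ℕ → Fin n → ℝ)), IsMinOn (dualObj K T y) (dualSet β T) s := by
  have hcont : Continuous fun lam : ℕ → Fin n → ℝ =>
      dualObj K T y (fun t => lam t - lam (t + 1)) :=
    (continuous_dualObj K T y).comp (by fun_prop)
  have hzero : (0 : ℕ → Fin n → ℝ) ∈ multiplierSet β T :=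
    ⟨⟨fun _ _ => neg_nonpos.2 hβ, fun _ _ => hβ⟩, rfl⟩
  obtain ⟨lam, hlam, hmin⟩ :=
    (isCompact_multiplierSet β T).exists_isMinOn ⟨0, hzero⟩ hcont.continuousOn
  refine ⟨fun t => lam t - lam (t + 1),
    (mem_dualSet_iff_exists_mem_multiplierSet hβ).2 ⟨lam, hlam, fun _ _ => rfl⟩, fun s hs => ?_⟩
  obtain ⟨mu, hmu, hsmu⟩ := (mem_dualSet_iff_exists_mem_multiplierSet hβ).1 hs
  exact (hmin hmu).trans_eq (dualObj_congr K y hsmu).symm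

end DualProblem

section Lagrangian

/-- The Lagrangian `L(x, s) = ∑ (½ ‖y_t - K x_t‖² + ⟪x_t, s_t⟫)` of the tracking problem, with the
switching cost replaced by its linear minorant given by `s`. -/
noncomputable def lagrangian (K : Matrix (Fin m) (Fin n) ℝ) (T : ℕ) (y : ℕ → Fin m → ℝ)
    (x s : ℕ → Fin n → ℝ) : ℝ :=
  ∑ t ∈ Icc 1 T, (1 / 2) * norm2sq (y t - K *ᵥ x t) + pathInner T x s

/-- The dual value `D(s) = ∑ ½ ‖y_t‖² - ½ ∑ ‖P y_t - (Kᵀ)† s_t‖²`, the minimum of the Lagrangian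
over all paths `x`. -/
noncomputable def dualValue (K : Matrix (Fin m) (Fin n) ℝ) (T : ℕ) (y : ℕ → Fin m → ℝ)
    (s : ℕ → Fin n → ℝ) : ℝ :=
  ∑ t ∈ Icc 1 T, (1 / 2) * norm2sq (y t) - (1 / 2) * dualObj K T y s

/-- The path minimizing the Lagrangian for a given dual path `s`, with the initial action `0` that
the switching cost of the first step refers to. -/
noncomputable def primalResponse (K : Matrix (Fin m) (Fin n) ℝ) (y : ℕ → Fin m → ℝ)
    (s : ℕ → Fin n → ℝ) (t : ℕ) : Fin n → ℝ :=
  if t = 0 then 0 else normalSolution K (y t) (s t)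

variable {K : Matrix (Fin m) (Fin n) ℝ} {T : ℕ} {y : ℕ → Fin m → ℝ}

lemma isMaxOn_dualValue_of_isMinOn_dualObj {C : Set (ℕ → Fin n → ℝ)} {s : ℕ → Fin n → ℝ}
    (hmin : IsMinOn (dualObj K T y) C s) : IsMaxOn (dualValue K T y) C s := by
  intro s' hs'
  have hle : dualObj K T y s ≤ dualObj K T y s' := hmin hs'
  change dualValue K T y s' ≤ dualValue K T y s
  unfold dualValue
  gcongr

lemma primalResponse_of_mem_Icc (s : ℕ → Fin n → ℝ) {t : ℕ} (ht : t ∈ Icc 1 T) :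
    primalResponse K y s t = normalSolution K (y t) (s t) :=
  if_neg (Nat.one_le_iff_ne_zero.1 (mem_Icc.1 ht).1)

lemma continuous_primalResponse : Continuous (primalResponse K y) := by
  refine continuous_pi fun t => ?_
  unfold primalResponse normalSolution
  split_ifs <;> fun_prop

lemma trackCost_eq_add_switchingCost (β : ℝ) (x : ℕ → Fin n → ℝ) :
    trackCost β K T y x =
      ∑ t ∈ Icc 1 T, (1 / 2) * norm2sq (y t - K *ᵥ x t) + switchingCost β T x :=
  sum_add_distrib

lemma lagrangian_le_trackCost {β : ℝ} {x s : ℕ → Fin n → ℝ} (hx : x 0 = 0)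
    (hs : s ∈ dualSet β T) : lagrangian K T y x s ≤ trackCost β K T y x := by
  rw [lagrangian, trackCost_eq_add_switchingCost]
  gcongr
  exact pathInner_le_switchingCost hx hs

lemma lagrangian_eq_dualValue_add (hK : IsUnit (Kᵀ * K).det) (x s : ℕ → Fin n → ℝ) :
    lagrangian K T y x s = dualValue K T y s +
      ∑ t ∈ Icc 1 T, (1 / 2) * norm2sq (K *ᵥ x t - K *ᵥ primalResponse K y s t) := by
  rw [lagrangian, dualValue, pathInner, dualObj, mul_sum, ← sum_sub_distrib, ← sum_add_distrib,
    ← sum_add_distrib]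
  refine sum_congr rfl fun t ht => ?_
  rw [primalResponse_of_mem_Icc s ht, half_norm2sq_sub_mulVec_add_dotProduct hK]

lemma lagrangian_primalResponse (hK : IsUnit (Kᵀ * K).det) (s : ℕ → Fin n → ℝ) :
    lagrangian K T y (primalResponse K y s) s = dualValue K T y s := by
  simp [lagrangian_eq_dualValue_add hK, norm2sq]

lemma dualValue_le_lagrangian (hK : IsUnit (Kᵀ * K).det) (x s : ℕ → Fin n → ℝ) :
    dualValue K T y s ≤ lagrangian K T y x s := by
  rw [lagrangian_eq_dualValue_add hK]
  exact le_add_of_nonneg_right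
    (sum_nonneg fun t _ => mul_nonneg one_half_pos.le (norm2sq_nonneg _))

lemma pathInner_primalResponse_nonpos (hK : IsUnit (Kᵀ * K).det) {s d : ℕ → Fin n → ℝ}
    {e : ℝ} (he : 0 < e) (hle : dualValue K T y (s + e • d) ≤ dualValue K T y s) :
    pathInner T (primalResponse K y (s + e • d)) d ≤ 0 := by
  set x := primalResponse K y (s + e • d)
  have hlag : lagrangian K T y x (s + e • d) ≤ lagrangian K T y x s :=
    calc lagrangian K T y x (s + e • d) = dualValue K T y (s + e • d) :=
          lagrangian_primalResponse hK _
      _ ≤ dualValue K T y s := hle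
      _ ≤ lagrangian K T y x s := dualValue_le_lagrangian hK x s
  rw [lagrangian, lagrangian, pathInner_add_smul] at hlag
  exact nonpos_of_mul_nonpos_right (by linarith) he

-- Danskin's argument: test with the responses at `s + e • (s' - s)` and let `e → 0⁺`.
lemma isMaxOn_pathInner_primalResponse (hK : IsUnit (Kᵀ * K).det) {C : Set (ℕ → Fin n → ℝ)}
    (hC : Convex ℝ C) {s : ℕ → Fin n → ℝ} (hs : s ∈ C) (hmax : IsMaxOn (dualValue K T y) C s) :
    IsMaxOn (pathInner T (primalResponse K y s)) C s := by
  intro s' hs'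
  have hcont : Continuous fun e : ℝ =>
      pathInner T (primalResponse K y (s + e • (s' - s))) (s' - s) :=
    (continuous_pathInner_left T _).comp (continuous_primalResponse.comp (by fun_prop))
  have hlim := (hcont.tendsto 0).mono_left (nhdsWithin_le_nhds (s := Set.Ioi 0))
  rw [zero_smul, add_zero] at hlim
  have hnonpos : pathInner T (primalResponse K y s) (s' - s) ≤ 0 := by
    refine le_of_tendsto hlim ?_
    filter_upwards [Ioo_mem_nhdsGT one_pos] with e he
    exact pathInner_primalResponse_nonpos hK he.1
      (hmax (hC.add_smul_sub_mem hs hs' ⟨he.1.le, he.2.le⟩))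
  rwa [pathInner_sub, sub_nonpos] at hnonpos

lemma trackCost_primalResponse {β : ℝ} (hβ : 0 ≤ β) (hK : IsUnit (Kᵀ * K).det)
    {s : ℕ → Fin n → ℝ} (hs : s ∈ dualSet β T)
    (hmax : IsMaxOn (dualValue K T y) (dualSet β T) s) :
    trackCost β K T y (primalResponse K y s) = dualValue K T y s := by
  set x := primalResponse K y s
  have hx : IsMaxOn (pathInner T x) (dualSet β T) s :=
    isMaxOn_pathInner_primalResponse hK (convex_dualSet β T) hs hmax
  have hswitch : switchingCost β T x = pathInner T x s :=
    (isGreatest_pathInner_image_dualSet hβ T (if_pos rfl)).unique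
      ⟨Set.mem_image_of_mem _ hs, Set.forall_mem_image.2 hx⟩
  rw [← lagrangian_primalResponse hK, trackCost_eq_add_switchingCost, hswitch, lagrangian]

end Lagrangian

end

/-- Strong duality for the smoothed tracking problem: the primal minimum equals
`Σ ½‖y_t‖² − ½·min_{s∈S} Σ‖P y_t − (Kᵀ)† s_t‖²`, both minima are attained, and the
minimizers are linked by `KᵀK x*_t = Kᵀ y_t − s*_t`. -/
theorem strong_duality_smoothed_tracking
    (m n T : ℕ) (hm : 1 ≤ m) (hn : 1 ≤ n) (hT : 1 ≤ T)
    (K : Matrix (Fin m) (Fin n) ℝ) (hK : IsUnit (K.transpose * K).det)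
    (β : ℝ) (hβ : 0 < β)
    (y : ℕ → Fin m → ℝ) :
    ∃ (xstar : ℕ → Fin n → ℝ) (sstar : ℕ → Fin n → ℝ),
      xstar 0 = 0 ∧
      (∀ x : ℕ → Fin n → ℝ, x 0 = 0 →
        trackCost β K T y xstar ≤ trackCost β K T y x) ∧
      sstar ∈ dualSet β T ∧
      (∀ s ∈ dualSet β T, dualObj K T y sstar ≤ dualObj K T y s) ∧
      trackCost β K T y xstar
        = (∑ t ∈ Finset.Icc 1 T, (1 / 2) * norm2sq (y t))
          - (1 / 2) * dualObj K T y sstar ∧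
      (∀ t ∈ Finset.Icc 1 T,
        (K.transpose * K).mulVec (xstar t) = K.transpose.mulVec (y t) - sstar t) := by
  obtain ⟨s, hs, hmin⟩ := exists_isMinOn_dualObj hβ.le K T y
  have hvalue : trackCost β K T y (primalResponse K y s) = dualValue K T y s :=
    trackCost_primalResponse hβ.le hK hs (isMaxOn_dualValue_of_isMinOn_dualObj hmin)
  refine ⟨primalResponse K y s, s, if_pos rfl, fun x hx => ?_, hs, fun _ hs' => hmin hs', hvalue,
    fun t ht => ?_⟩
  · calc trackCost β K T y (primalResponse K y s) = dualValue K T y s := hvalue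
      _ ≤ lagrangian K T y x s := dualValue_le_lagrangian hK x s
      _ ≤ trackCost β K T y x := lagrangian_le_trackCost hx hs
  · rw [primalResponse_of_mem_Icc s ht]
    exact gram_mulVec_normalSolution hK (y t) (s t)
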